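/- Let k ≥ 2. If C_{k+1}^{>++} is nonempty, then both C_k^{>++} and C_k^{<++} are nonempty; moreover the curves f_k^> and f_k^< lie strictly below the curve f_{k+1}^>: for every x in the common domain, f_k^>(x) < f_{k+1}^>(x) and f_k^<(x) < f_{k+1}^>(x). -/

import Mathlib

open Set Filter Classical

noncomputable section

/-- `u c s` is the solution of `-(p·u')' + q·u = c·w·u` with `u c s s = 0` and
`(u c s)' s = 1/(p s)`; `u'` is its `t`-derivative. -/
def IsSolFamily (p q w : ℝ → ℝ) (u u' : ℝ → ℝ → ℝ → ℝ) : Prop :=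
  ∀ c s : ℝ, u c s s = 0 ∧ u' c s s = 1 / p s ∧
    ∀ t : ℝ, HasDerivAt (u c s) (u' c s t) t ∧
      HasDerivAt (fun τ => p τ * u' c s τ) (q t * u c s t - c * w t * u c s t) t

/-- Zero set of `u c s` strictly after `s`. -/
def zeroSet (u : ℝ → ℝ → ℝ → ℝ) (c s : ℝ) : Set ℝ := {t | s < t ∧ u c s t = 0}

/-- The zero-function `φ_c(s)`, valued in `EReal` (equal to `⊤` when `u c s`
never vanishes after `s`). -/
noncomputable def phiE (u : ℝ → ℝ → ℝ → ℝ) (c s : ℝ) : EReal :=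
  if (zeroSet u c s).Nonempty then ((sInf (zeroSet u c s) : ℝ) : EReal) else ⊤

/-- The zero-function as a map `EReal → EReal` (`⊤` propagates). -/
noncomputable def phiStep (u : ℝ → ℝ → ℝ → ℝ) (c : ℝ) (x : EReal) : EReal :=
  if x = ⊤ ∨ x = ⊥ then ⊤ else phiE u c x.toReal

/-- `Φ_k^>(a,b)`: composition of `k` alternating zero-functions `φ_a^m, φ_b^n`,
starting with `φ_a^m`. -/
noncomputable def PhiGt (uM uN : ℝ → ℝ → ℝ → ℝ) (a b : ℝ) : ℕ → EReal → EReal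
  | 0 => id
  | k + 1 => (if k % 2 = 0 then phiStep uM a else phiStep uN b) ∘ PhiGt uM uN a b k

/-- `Φ_k^<(a,b)`: composition of `k` alternating zero-functions, starting with
`φ_b^n`. -/
noncomputable def PhiLt (uM uN : ℝ → ℝ → ℝ → ℝ) (a b : ℝ) : ℕ → EReal → EReal
  | 0 => id
  | k + 1 => (if k % 2 = 0 then phiStep uN b else phiStep uM a) ∘ PhiLt uM uN a b k

/-- `C_k^{>++} = {(a,b) ∈ ℝ⁺×ℝ⁺ : Φ_k^>(a,b)(T₁) = T₂}`. -/
def CGt (uM uN : ℝ → ℝ → ℝ → ℝ) (T₁ T₂ : ℝ) (k : ℕ) : Set (ℝ × ℝ) :=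
  {ab | 0 < ab.1 ∧ 0 < ab.2 ∧ PhiGt uM uN ab.1 ab.2 k (T₁ : EReal) = (T₂ : EReal)}

/-- `C_k^{<++} = {(a,b) ∈ ℝ⁺×ℝ⁺ : Φ_k^<(a,b)(T₁) = T₂}`. -/
def CLt (uM uN : ℝ → ℝ → ℝ → ℝ) (T₁ T₂ : ℝ) (k : ℕ) : Set (ℝ × ℝ) :=
  {ab | 0 < ab.1 ∧ 0 < ab.2 ∧ PhiLt uM uN ab.1 ab.2 k (T₁ : EReal) = (T₂ : EReal)}

/-!
Only five properties of the zero-functions matter (`IsZeroFunction`): `φ_c` moves points to the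
right, it is strictly increasing where finite (Sturm separation, from the constancy of the
Wronskian), it is antitone in `c > 0` although the weight may change sign (Picone's identity,
thanks to `q ≥ 0`), it is identically `⊤` at `c = 0`, and it is jointly continuous (Grönwall).

The first two properties give `Φ_k^>, Φ_k^< < Φ_{k+1}^>` pointwise, so at a point `(a, b)` of
`C_{k+1}^{>++}` both `Φ_k` are smaller than `T₂`. Along the segment from `(a, b)` to the origin they
grow continuously to `⊤`, hence take the value `T₂`. Since `Φ_k` is antitone in `(a, b)`, a point
where `Φ_k < T₂` cannot lie below a point of the curve `Φ_k = T₂`.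
-/

section

open scoped Topology NNReal

section RealAnalysis

variable {f g : ℝ → ℝ} {f' g' a : ℝ}

theorem nonpos_of_hasDerivAt_of_pos_left (hf : HasDerivAt f f' a) (ha : f a = 0)
    (hpos : ∀ᶠ x in 𝓝[<] a, 0 < f x) : f' ≤ 0 := by
  by_contra! hf'
  have hsign := eventually_nhdsWithin_sign_eq_of_deriv_pos (hf.deriv ▸ hf') ha
  obtain ⟨x, hfx, hsx, hxa⟩ :=
    (hpos.and ((hsign.filter_mono nhdsWithin_le_nhds).and self_mem_nhdsWithin)).exists
  rw [sign_pos hfx, sign_neg (sub_neg.2 hxa)] at hsx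
  exact absurd hsx (by decide)

theorem tendsto_div_of_hasDerivAt (hf : HasDerivAt f f' a) (hg : HasDerivAt g g' a)
    (hfa : f a = 0) (hga : g a = 0) (hg' : g' ≠ 0) :
    Tendsto (fun x => f x / g x) (𝓝[≠] a) (𝓝 (f' / g')) := by
  refine (hf.tendsto_slope.div hg.tendsto_slope hg').congr' ?_
  filter_upwards [self_mem_nhdsWithin] with x hx
  rw [Pi.div_apply, slope_def_field, slope_def_field, hfa, hga, sub_zero, sub_zero,
    div_div_div_cancel_right₀ (sub_ne_zero.2 hx)]

theorem continuous_gronwallBound (K x : ℝ) :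
    Continuous fun y : ℝ × ℝ => gronwallBound y.1 K y.2 x := by
  by_cases hK : K = 0
  · simp only [hK, gronwallBound_K0]
    fun_prop
  · simp only [gronwallBound_of_K_ne_0 hK]
    fun_prop

end RealAnalysis

/-- The right-hand side of the first order system in `(u, p·u')` equivalent to the equation of
`IsSolFamily`. -/
def sturmField (p q w : ℝ → ℝ) (c t : ℝ) (z : ℝ × ℝ) : ℝ × ℝ :=
  ((p t)⁻¹ * z.2, (q t - c * w t) * z.1)

/-- The phase vector `(u, p·u')` of the solution `u c s` at time `t`. -/
def phase (p : ℝ → ℝ) (u u' : ℝ → ℝ → ℝ → ℝ) (c s t : ℝ) : ℝ × ℝ :=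
  (u c s t, p t * u' c s t)

/-- Picone's function for the solutions `u c s` and `u d s`. Dividing the first term by `c` and the
second by `d` removes the weight from its derivative. -/
def picone (p : ℝ → ℝ) (u u' : ℝ → ℝ → ℝ → ℝ) (c d s t : ℝ) : ℝ :=
  u c s t * (p t * u' c s t) / c - u c s t ^ 2 * (p t * u' d s t) / (d * u d s t)

section Field

variable {p q w : ℝ → ℝ}

theorem sturmField_zero (c t : ℝ) : sturmField p q w c t 0 = 0 := by
  simp [sturmField]

theorem dist_sturmField (c d t : ℝ) (z : ℝ × ℝ) :
    dist (sturmField p q w c t z) (sturmField p q w d t z) = dist c d * |w t * z.1| := by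
  have hsub : (q t - c * w t) * z.1 - (q t - d * w t) * z.1 = -((c - d) * (w t * z.1)) := by ring
  rw [sturmField, sturmField, Prod.dist_eq, dist_self, max_eq_right dist_nonneg, Real.dist_eq,
    Real.dist_eq, hsub, abs_neg, abs_mul]

theorem lipschitzWith_sturmField (c t : ℝ) :
    LipschitzWith (max ‖(p t)⁻¹‖₊ ‖q t - c * w t‖₊) (sturmField p q w c t) := by
  rw [← mul_one ‖(p t)⁻¹‖₊, ← mul_one ‖q t - c * w t‖₊]
  exact ((lipschitzWith_smul (p t)⁻¹).comp LipschitzWith.prod_snd).prodMk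
    ((lipschitzWith_smul (q t - c * w t)).comp LipschitzWith.prod_fst)

theorem exists_lipschitzWith_sturmField (hp : Continuous p) (hq : Continuous q)
    (hw : Continuous w) (hp₀ : ∀ t, 0 < p t) {S : Set (ℝ × ℝ)} (hS : IsCompact S) :
    ∃ K : ℝ≥0, ∀ x ∈ S, LipschitzWith K (sturmField p q w x.1 x.2) := by
  have hcont : Continuous fun x : ℝ × ℝ => max ‖(p x.2)⁻¹‖₊ ‖q x.2 - x.1 * w x.2‖₊ := by
    have hinv : Continuous fun x : ℝ × ℝ => (p x.2)⁻¹ :=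
      (hp.comp continuous_snd).inv₀ fun x => (hp₀ x.2).ne'
    exact hinv.nnnorm.max (by fun_prop)
  obtain ⟨K, hK⟩ := hS.bddAbove_image hcont.continuousOn
  exact ⟨K, fun x hx => (lipschitzWith_sturmField x.1 x.2).weaken (hK (mem_image_of_mem _ hx))⟩

end Field

namespace IsSolFamily

variable {p q w : ℝ → ℝ} {u u' : ℝ → ℝ → ℝ → ℝ} {c d s t z T : ℝ}

theorem apply_self (hu : IsSolFamily p q w u u') (c s : ℝ) : u c s s = 0 := (hu c s).1

theorem quasiDeriv_self (hu : IsSolFamily p q w u u') (hp₀ : ∀ t, 0 < p t) (c s : ℝ) :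
    p s * u' c s s = 1 := by
  rw [(hu c s).2.1, mul_one_div_cancel (hp₀ s).ne']

theorem deriv_self_pos (hu : IsSolFamily p q w u u') (hp₀ : ∀ t, 0 < p t) (c s : ℝ) :
    0 < u' c s s := by
  rw [(hu c s).2.1]
  exact one_div_pos.2 (hp₀ s)

protected theorem hasDerivAt (hu : IsSolFamily p q w u u') (c s t : ℝ) :
    HasDerivAt (u c s) (u' c s t) t :=
  ((hu c s).2.2 t).1

theorem hasDerivAt_quasiDeriv (hu : IsSolFamily p q w u u') (c s t : ℝ) :
    HasDerivAt (fun τ => p τ * u' c s τ) ((q t - c * w t) * u c s t) t :=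
  ((hu c s).2.2 t).2.congr_deriv (sub_mul _ _ _).symm

protected theorem continuous (hu : IsSolFamily p q w u u') (c s : ℝ) : Continuous (u c s) :=
  continuous_iff_continuousAt.2 fun t => (hu.hasDerivAt c s t).continuousAt

theorem continuous_quasiDeriv (hu : IsSolFamily p q w u u') (c s : ℝ) :
    Continuous fun τ => p τ * u' c s τ :=
  continuous_iff_continuousAt.2 fun t => (hu.hasDerivAt_quasiDeriv c s t).continuousAt

theorem eventually_lt_quasiDeriv (hu : IsSolFamily p q w u u') (hp₀ : ∀ t, 0 < p t) (c s : ℝ)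
    {r : ℝ} (hr : r < 1) : ∀ᶠ t in 𝓝 s, r < p t * u' c s t :=
  (hu.continuous_quasiDeriv c s).continuousAt.eventually_const_lt <|
    hr.trans_eq (hu.quasiDeriv_self hp₀ c s).symm

theorem phase_self (hu : IsSolFamily p q w u u') (hp₀ : ∀ t, 0 < p t) (c s : ℝ) :
    phase p u u' c s s = (0, 1) := by
  rw [phase, hu.apply_self, hu.quasiDeriv_self hp₀]

theorem hasDerivAt_phase (hu : IsSolFamily p q w u u') (hp₀ : ∀ t, 0 < p t) (c s t : ℝ) :
    HasDerivAt (phase p u u' c s) (sturmField p q w c t (phase p u u' c s t)) t :=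
  ((hu.hasDerivAt c s t).congr_deriv (inv_mul_cancel_left₀ (hp₀ t).ne' _).symm).prodMk
    (hu.hasDerivAt_quasiDeriv c s t)

theorem continuous_phase (hu : IsSolFamily p q w u u') (c s : ℝ) :
    Continuous (phase p u u' c s) :=
  (hu.continuous c s).prodMk (hu.continuous_quasiDeriv c s)

section FirstZero

theorem pos_of_deriv_pos (hu : IsSolFamily p q w u u')
    (h : ∀ τ ∈ Ioo s t, 0 < u' c s τ) (hst : s < t) : 0 < u c s t := by
  have hmono : StrictMonoOn (u c s) (Icc s t) := by
    refine strictMonoOn_of_deriv_pos (convex_Icc s t)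
      (hu.continuous c s).continuousOn fun τ hτ => ?_
    rw [interior_Icc] at hτ
    rw [(hu.hasDerivAt c s τ).deriv]
    exact h τ hτ
  simpa only [hu.apply_self] using
    hmono (left_mem_Icc.2 hst.le) (right_mem_Icc.2 hst.le) hst

theorem eventually_pos (hu : IsSolFamily p q w u u') (hp₀ : ∀ t, 0 < p t) (c s : ℝ) :
    ∀ᶠ t in 𝓝[>] s, 0 < u c s t := by
  have hderiv : 0 < deriv (u c s) s := by
    rw [(hu.hasDerivAt c s s).deriv]
    exact hu.deriv_self_pos hp₀ c s
  have hsign := eventually_nhdsWithin_sign_eq_of_deriv_pos hderiv (hu.apply_self c s)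
  filter_upwards [hsign.filter_mono nhdsWithin_le_nhds, self_mem_nhdsWithin] with t ht hst
  rwa [sign_pos (sub_pos.2 hst), sign_eq_one_iff] at ht

theorem pos_of_ne_zero (hu : IsSolFamily p q w u u') (hp₀ : ∀ t, 0 < p t)
    (h : ∀ τ ∈ Ioc s t, u c s τ ≠ 0) (hst : s < t) : 0 < u c s t := by
  obtain ⟨r, hr, hsr, hrt⟩ :=
    ((hu.eventually_pos hp₀ c s).and (Ioo_mem_nhdsGT hst)).exists
  by_contra! ht
  obtain ⟨τ, hτ, hzero⟩ :=
    intermediate_value_Icc' hrt.le (hu.continuous c s).continuousOn ⟨ht, hr.le⟩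
  exact h τ ⟨hsr.trans_le hτ.1, hτ.2⟩ hzero

theorem isClosed_zeroSet (hu : IsSolFamily p q w u u') (hp₀ : ∀ t, 0 < p t) (c s : ℝ) :
    IsClosed (zeroSet u c s) := by
  obtain ⟨r, hsr, hr⟩ := mem_nhdsGT_iff_exists_Ioo_subset.1 (hu.eventually_pos hp₀ c s)
  have heq : zeroSet u c s = Ici r ∩ u c s ⁻¹' {0} := by
    ext t
    refine ⟨fun ⟨hst, hzero⟩ => ⟨?_, hzero⟩, fun ⟨hrt, hzero⟩ => ⟨hsr.trans_le hrt, hzero⟩⟩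
    by_contra hrt
    exact (hr ⟨hst, not_le.1 hrt⟩ : 0 < u c s t).ne' hzero
  rw [heq]
  exact isClosed_Ici.inter (isClosed_singleton.preimage (hu.continuous c s))

theorem phiE_eq_top_or_isLeast (hu : IsSolFamily p q w u u') (hp₀ : ∀ t, 0 < p t) (c s : ℝ) :
    phiE u c s = ⊤ ∨ ∃ z : ℝ, phiE u c s = z ∧ IsLeast (zeroSet u c s) z := by
  by_cases hne : (zeroSet u c s).Nonempty
  · exact Or.inr ⟨_, if_pos hne,
      (hu.isClosed_zeroSet hp₀ c s).isLeast_csInf hne ⟨s, fun _ ht => ht.1.le⟩⟩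
  · exact Or.inl (if_neg hne)

theorem exists_isLeast_zeroSet (hu : IsSolFamily p q w u u') (hp₀ : ∀ t, 0 < p t)
    (h : phiE u c s ≠ ⊤) : ∃ z : ℝ, phiE u c s = z ∧ IsLeast (zeroSet u c s) z :=
  (hu.phiE_eq_top_or_isLeast hp₀ c s).resolve_left h

theorem pos_of_lt_isLeast (hu : IsSolFamily p q w u u') (hp₀ : ∀ t, 0 < p t)
    (hz : IsLeast (zeroSet u c s) z) (ht : t ∈ Ioo s z) : 0 < u c s t :=
  hu.pos_of_ne_zero hp₀
    (fun _ hτ hzero => (hz.2 ⟨hτ.1, hzero⟩).not_gt (hτ.2.trans_lt ht.2)) ht.1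

theorem coe_lt_phiE_iff (hu : IsSolFamily p q w u u') (hp₀ : ∀ t, 0 < p t) :
    (T : EReal) < phiE u c s ↔ ∀ t ∈ Ioc s T, 0 < u c s t := by
  rcases hu.phiE_eq_top_or_isLeast hp₀ c s with htop | ⟨z, hφ, hz⟩
  · have hempty : ¬(zeroSet u c s).Nonempty := fun hne => by simp [phiE, hne] at htop
    simp only [htop, EReal.coe_lt_top, true_iff]
    exact fun t ht => hu.pos_of_ne_zero hp₀ (fun τ hτ hzero => hempty ⟨τ, hτ.1, hzero⟩) ht.1
  · rw [hφ, EReal.coe_lt_coe_iff]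
    refine ⟨fun hTz t ht => hu.pos_of_lt_isLeast hp₀ hz ⟨ht.1, ht.2.trans_lt hTz⟩, fun h => ?_⟩
    by_contra! hzT
    exact (h z ⟨hz.1.1, hzT⟩).ne' hz.1.2

theorem coe_lt_phiE_self (hu : IsSolFamily p q w u u') (hp₀ : ∀ t, 0 < p t) (c s : ℝ) :
    (s : EReal) < phiE u c s :=
  (hu.coe_lt_phiE_iff hp₀).2 fun _ ht => absurd ht.1 ht.2.not_gt

theorem deriv_nonpos_of_isLeast (hu : IsSolFamily p q w u u') (hp₀ : ∀ t, 0 < p t)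
    (hz : IsLeast (zeroSet u c s) z) : u' c s z ≤ 0 := by
  refine nonpos_of_hasDerivAt_of_pos_left (hu.hasDerivAt c s z) hz.1.2 ?_
  filter_upwards [Ioo_mem_nhdsLT hz.1.1] with t ht
  exact hu.pos_of_lt_isLeast hp₀ hz ht

end FirstZero

section Monotonicity

theorem wronskian_eq (hu : IsSolFamily p q w u u') (c s s' t₁ t₂ : ℝ) :
    u c s t₁ * (p t₁ * u' c s' t₁) - u c s' t₁ * (p t₁ * u' c s t₁) =
      u c s t₂ * (p t₂ * u' c s' t₂) - u c s' t₂ * (p t₂ * u' c s t₂) := by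
  have hderiv : ∀ t, HasDerivAt
      (fun t => u c s t * (p t * u' c s' t) - u c s' t * (p t * u' c s t)) 0 t := fun t =>
    (((hu.hasDerivAt c s t).mul (hu.hasDerivAt_quasiDeriv c s' t)).sub
      ((hu.hasDerivAt c s' t).mul (hu.hasDerivAt_quasiDeriv c s t))).congr_deriv (by ring)
  exact is_const_of_deriv_eq_zero (fun t => (hderiv t).differentiableAt)
    (fun t => (hderiv t).deriv) t₁ t₂

/-- Were `u c s` positive up to the first zero `z` of `u c s'`, the Wronskian of the two would be
positive at `s'` and nonpositive at `z`. -/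
theorem phiE_lt_phiE (hu : IsSolFamily p q w u u') (hp₀ : ∀ t, 0 < p t) {s' : ℝ} (hs : s < s')
    (hfin : phiE u c s' ≠ ⊤) : phiE u c s < phiE u c s' := by
  obtain ⟨z, hφ, hz⟩ := hu.exists_isLeast_zeroSet hp₀ hfin
  by_contra! hle
  have hpos : ∀ t ∈ Ioo s z, 0 < u c s t := fun t ht =>
    (hu.coe_lt_phiE_iff hp₀).1 ((EReal.coe_lt_coe_iff.2 ht.2).trans_le (hφ ▸ hle)) t ⟨ht.1, le_rfl⟩
  have huz : 0 ≤ u c s z :=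
    ge_of_tendsto ((hu.continuous c s).continuousWithinAt (s := Iio z)) <| by
      filter_upwards [Ioo_mem_nhdsLT (hs.trans hz.1.1)] with t ht using (hpos t ht).le
  have hquasi : p z * u' c s' z ≤ 0 :=
    mul_nonpos_of_nonneg_of_nonpos (hp₀ z).le (hu.deriv_nonpos_of_isLeast hp₀ hz)
  have hW := hu.wronskian_eq c s s' s' z
  rw [hu.quasiDeriv_self hp₀, hu.apply_self, hz.1.2, zero_mul, zero_mul, sub_zero, sub_zero,
    mul_one] at hW
  exact (hpos s' ⟨hs, hz.1.1⟩).not_ge (hW ▸ mul_nonpos_of_nonneg_of_nonpos huz hquasi)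

theorem phiE_zero (hu : IsSolFamily p q w u u') (hp₀ : ∀ t, 0 < p t) (hq₀ : ∀ t, 0 ≤ q t)
    (s : ℝ) : phiE u 0 s = ⊤ := by
  by_contra hfin
  obtain ⟨z, -, hz⟩ := hu.exists_isLeast_zeroSet hp₀ hfin
  have hmono : MonotoneOn (fun τ => p τ * u' 0 s τ) (Icc s z) := by
    refine monotoneOn_of_hasDerivWithinAt_nonneg (convex_Icc s z)
      (hu.continuous_quasiDeriv 0 s).continuousOn
      (fun t _ => (hu.hasDerivAt_quasiDeriv 0 s t).hasDerivWithinAt) fun t ht => ?_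
    rw [interior_Icc] at ht
    rw [zero_mul, sub_zero]
    exact mul_nonneg (hq₀ t) (hu.pos_of_lt_isLeast hp₀ hz ht).le
  refine (hu.pos_of_deriv_pos (fun t ht => ?_) hz.1.1).ne' hz.1.2
  have hle : p s * u' 0 s s ≤ p t * u' 0 s t :=
    hmono (left_mem_Icc.2 hz.1.1.le) (Ioo_subset_Icc_self ht) ht.1.le
  rw [hu.quasiDeriv_self hp₀] at hle
  exact pos_of_mul_pos_right (one_pos.trans_le hle) (hp₀ t).le

theorem hasDerivAt_picone (hu : IsSolFamily p q w u u') (hc : c ≠ 0) (hd : d ≠ 0)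
    (hv : u d s t ≠ 0) :
    HasDerivAt (picone p u u' c d s)
      ((c⁻¹ - d⁻¹) * (p t * u' c s t ^ 2 + q t * u c s t ^ 2) +
        p t / d * (u' c s t - u c s t * u' d s t / u d s t) ^ 2) t := by
  have hfst := ((hu.hasDerivAt c s t).mul (hu.hasDerivAt_quasiDeriv c s t)).div_const c
  have hsnd := (((hu.hasDerivAt c s t).pow 2).mul (hu.hasDerivAt_quasiDeriv d s t)).div
    ((hu.hasDerivAt d s t).const_mul d) (mul_ne_zero hd hv)
  refine (hfst.sub hsnd).congr_deriv ?_
  simp only [Pi.mul_apply, Pi.pow_apply]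
  field_simp
  ring

theorem picone_eq_zero_of_eq_zero (h : u c s t = 0) : picone p u u' c d s t = 0 := by
  simp [picone, h]

theorem continuousAt_picone_self (hu : IsSolFamily p q w u u') (hp₀ : ∀ t, 0 < p t) (c d s : ℝ) :
    ContinuousAt (picone p u u' c d s) s := by
  have hquot := tendsto_div_of_hasDerivAt (hu.hasDerivAt c s s) (hu.hasDerivAt d s s)
    (hu.apply_self c s) (hu.apply_self d s) (hu.deriv_self_pos hp₀ d s).ne'
  have htendsto {f : ℝ → ℝ} (hf : Continuous f) : Tendsto f (𝓝[≠] s) (𝓝 (f s)) :=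
    hf.continuousAt.mono_left nhdsWithin_le_nhds
  have hlim := (htendsto (hu.continuous c s)).mul
    (((htendsto (hu.continuous_quasiDeriv c s)).div_const c).sub
      (((htendsto (hu.continuous_quasiDeriv d s)).div_const d).mul hquot))
  rw [continuousAt_iff_punctured_nhds, picone_eq_zero_of_eq_zero (hu.apply_self c s)]
  rw [hu.apply_self, zero_mul] at hlim
  refine hlim.congr fun t => ?_
  rw [picone]
  ring

theorem monotoneOn_picone (hu : IsSolFamily p q w u u') (hp₀ : ∀ t, 0 < p t)
    (hq₀ : ∀ t, 0 ≤ q t) (hc : 0 < c) (hcd : c ≤ d) (hv : ∀ t ∈ Ioc s z, 0 < u d s t) :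
    MonotoneOn (picone p u u' c d s) (Icc s z) := by
  have hd : 0 < d := hc.trans_le hcd
  have hderiv := fun t ht => hu.hasDerivAt_picone hc.ne' hd.ne' (hv t ht).ne'
  refine monotoneOn_of_hasDerivWithinAt_nonneg (convex_Icc s z) (fun t ht => ?_)
    (fun t ht => (hderiv t ?_).hasDerivWithinAt) fun t _ => ?_
  · rcases ht.1.eq_or_lt with rfl | hst
    · exact (hu.continuousAt_picone_self hp₀ c d s).continuousWithinAt
    · exact (hderiv t ⟨hst, ht.2⟩).continuousAt.continuousWithinAt
  · rw [interior_Icc] at ht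
    exact Ioo_subset_Ioc_self ht
  · have hinv : 0 ≤ c⁻¹ - d⁻¹ := sub_nonneg.2 (inv_anti₀ hc hcd)
    have hpt := hp₀ t
    have hqt := hq₀ t
    positivity

/-- If the first zero `z` of `u c s` came strictly before that of `u d s`, Picone's function would
be monotone on `[s, z]` and vanish at both ends, although it increases strictly near `s`. -/
theorem phiE_le_phiE_of_le (hu : IsSolFamily p q w u u') (hp₀ : ∀ t, 0 < p t)
    (hq₀ : ∀ t, 0 ≤ q t) (hc : 0 < c) (hcd : c ≤ d) (s : ℝ) : phiE u d s ≤ phiE u c s := by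
  rcases hcd.eq_or_lt with rfl | hlt
  · exact le_rfl
  have hd : 0 < d := hc.trans hlt
  by_contra! hcon
  obtain ⟨z, hφ, hz⟩ := hu.exists_isLeast_zeroSet hp₀ hcon.ne_top
  have hv : ∀ t ∈ Ioc s z, 0 < u d s t := (hu.coe_lt_phiE_iff hp₀).1 (hφ ▸ hcon)
  have hmono := hu.monotoneOn_picone hp₀ hq₀ hc hcd hv
  have hzero : ∀ t ∈ Icc s z, picone p u u' c d s t = 0 := fun t ht => by
    apply le_antisymm
    · rw [← picone_eq_zero_of_eq_zero (p := p) (u' := u') (d := d) hz.1.2]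
      exact hmono ht (right_mem_Icc.2 hz.1.1.le) ht.2
    · rw [← picone_eq_zero_of_eq_zero (p := p) (u' := u') (d := d) (hu.apply_self c s)]
      exact hmono (left_mem_Icc.2 hz.1.1.le) ht ht.1
  have hquasi : ∀ᶠ t in 𝓝 s, 0 < p t * u' c s t :=
    hu.eventually_lt_quasiDeriv hp₀ c s one_pos
  obtain ⟨r, hr, hsrz⟩ :=
    ((hquasi.filter_mono nhdsWithin_le_nhds).and (Ioo_mem_nhdsGT hz.1.1)).exists
  have hderiv := hu.hasDerivAt_picone hc.ne' hd.ne' (hv r (Ioo_subset_Ioc_self hsrz)).ne'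
  have hderiv_zero : HasDerivAt (picone p u u' c d s) 0 r :=
    (hasDerivAt_const r 0).congr_of_eventuallyEq <| by
      filter_upwards [Icc_mem_nhds hsrz.1 hsrz.2] using hzero
  refine (add_pos_of_pos_of_nonneg (mul_pos (sub_pos.2 (inv_strictAnti₀ hc hlt)) ?_) ?_).ne'
    (hderiv.unique hderiv_zero)
  all_goals
    have hpr := hp₀ r
    have hqr := hq₀ r
    have hur := pos_of_mul_pos_right hr hpr.le
    positivity

end Monotonicity

section Continuity

theorem phase_ne_zero (hu : IsSolFamily p q w u u') (hp : Continuous p) (hq : Continuous q)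
    (hw : Continuous w) (hp₀ : ∀ t, 0 < p t) (c s t : ℝ) : phase p u u' c s t ≠ 0 := by
  intro hzero
  obtain ⟨K, hK⟩ := exists_lipschitzWith_sturmField hp hq hw hp₀
    (isCompact_singleton.prod isCompact_Icc : IsCompact ({c} ×ˢ Icc (min s t - 1) (max s t + 1)))
  have hmem : ∀ τ ∈ Icc (min s t) (max s t), τ ∈ Ioo (min s t - 1) (max s t + 1) := fun τ hτ =>
    ⟨by linarith [hτ.1], by linarith [hτ.2]⟩
  have heq := ODE_solution_unique_of_mem_Icc (v := sturmField p q w c) (s := fun _ => univ)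
    (fun τ hτ => (hK (c, τ) ⟨rfl, Ioo_subset_Icc_self hτ⟩).lipschitzOnWith)
    (hmem t ⟨min_le_right s t, le_max_right s t⟩)
    (hu.continuous_phase c s).continuousOn
    (fun τ _ => hu.hasDerivAt_phase hp₀ c s τ) (fun _ _ => mem_univ _)
    (continuousOn_const (c := (0 : ℝ × ℝ)))
    (fun τ _ => (hasDerivAt_const τ 0).congr_deriv (sturmField_zero c τ).symm)
    (fun _ _ => mem_univ _) hzero
    (Ioo_subset_Icc_self (hmem s ⟨min_le_left s t, le_max_left s t⟩))
  rw [hu.phase_self hp₀] at heq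
  exact one_ne_zero (congrArg Prod.snd heq)

theorem deriv_neg_of_isLeast (hu : IsSolFamily p q w u u') (hp : Continuous p)
    (hq : Continuous q) (hw : Continuous w) (hp₀ : ∀ t, 0 < p t)
    (hz : IsLeast (zeroSet u c s) z) : u' c s z < 0 := by
  refine (hu.deriv_nonpos_of_isLeast hp₀ hz).lt_of_ne fun hzero => ?_
  refine hu.phase_ne_zero hp hq hw hp₀ c s z ?_
  rw [phase, hz.1.2, hzero, mul_zero, Prod.mk_zero_zero]

/-- The solution `u c₀ s₀` satisfies the system of `u c s` up to an error of size
`|c₀ - c| * |w * u c₀ s₀|`. -/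
theorem dist_phase_le_gronwallBound (hu : IsSolFamily p q w u u') (hp₀ : ∀ t, 0 < p t)
    {c₀ s₀ η : ℝ} {K : ℝ≥0} (hst : s ≤ t)
    (hK : ∀ τ ∈ Ico s t, LipschitzWith K (sturmField p q w c τ))
    (hη : ∀ τ ∈ Ico s t, dist c₀ c * |w τ * u c₀ s₀ τ| ≤ η) :
    dist (phase p u u' c₀ s₀ t) (phase p u u' c s t) ≤
      gronwallBound (dist (phase p u u' c₀ s₀ s) (0, 1)) K η (t - s) := by
  have hdist := dist_le_of_approx_trajectories_ODE_of_mem (v := sturmField p q w c)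
    (s := fun _ => univ) (εf := η) (εg := 0) (fun τ hτ => (hK τ hτ).lipschitzOnWith)
    (hu.continuous_phase c₀ s₀).continuousOn
    (fun τ _ => (hu.hasDerivAt_phase hp₀ c₀ s₀ τ).hasDerivWithinAt)
    (fun τ hτ => (dist_sturmField c₀ c τ _).trans_le (hη τ hτ)) (fun _ _ => mem_univ _)
    (hu.continuous_phase c s).continuousOn
    (fun τ _ => (hu.hasDerivAt_phase hp₀ c s τ).hasDerivWithinAt)
    (fun _ _ => (dist_self _).le) (fun _ _ => mem_univ _) le_rfl t ⟨hst, le_rfl⟩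
  rwa [add_zero, hu.phase_self hp₀ c s] at hdist

theorem eventually_dist_phase_lt (hu : IsSolFamily p q w u u') (hp : Continuous p)
    (hq : Continuous q) (hw : Continuous w) (hp₀ : ∀ t, 0 < p t) (c₀ s₀ T : ℝ) {ε : ℝ}
    (hε : 0 < ε) :
    ∀ᶠ x in 𝓝 (c₀, s₀), ∀ t ∈ Icc x.2 T,
      dist (phase p u u' c₀ s₀ t) (phase p u u' x.1 x.2 t) < ε := by
  obtain ⟨K, hK⟩ := exists_lipschitzWith_sturmField hp hq hw hp₀
    ((isCompact_closedBall c₀ 1).prod (isCompact_Icc (a := s₀ - 1) (b := T)))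
  obtain ⟨M, hM⟩ := isCompact_Icc.exists_bound_of_continuousOn (s := Icc (s₀ - 1) T)
    (hw.mul (hu.continuous c₀ s₀)).continuousOn
  let δ : ℝ × ℝ → ℝ := fun x => dist (phase p u u' c₀ s₀ x.2) (0, 1)
  let η : ℝ × ℝ → ℝ := fun x => dist c₀ x.1 * M
  have hbound : ∀ᶠ x in 𝓝 (c₀, s₀), gronwallBound (δ x) K (η x) (T - (s₀ - 1)) < ε := by
    have hδ : Continuous δ :=
      ((hu.continuous_phase c₀ s₀).comp continuous_snd).dist continuous_const
    have hη : Continuous η := by fun_prop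
    refine ((continuous_gronwallBound K _).comp (hδ.prodMk hη)).continuousAt.eventually_lt_const ?_
    simpa [δ, η, hu.phase_self hp₀, gronwallBound_ε0_δ0] using hε
  filter_upwards [hbound, prod_mem_nhds (Metric.closedBall_mem_nhds c₀ one_pos)
    (Ici_mem_nhds (sub_one_lt s₀))] with x hx ⟨hxc, hxs⟩ t ht
  have hmem : ∀ τ ∈ Icc x.2 t, τ ∈ Icc (s₀ - 1) T := fun τ hτ =>
    ⟨le_trans hxs hτ.1, hτ.2.trans ht.2⟩
  have hη₀ : 0 ≤ η x :=
    mul_nonneg dist_nonneg ((norm_nonneg _).trans (hM t (hmem t ⟨ht.1, le_rfl⟩)))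
  calc
    dist (phase p u u' c₀ s₀ t) (phase p u u' x.1 x.2 t)
      ≤ gronwallBound (δ x) K (η x) (t - x.2) :=
        hu.dist_phase_le_gronwallBound hp₀ ht.1
          (fun τ hτ => hK (x.1, τ) ⟨hxc, hmem τ (Ico_subset_Icc_self hτ)⟩)
          fun τ hτ => mul_le_mul_of_nonneg_left (hM τ (hmem τ (Ico_subset_Icc_self hτ)))
            dist_nonneg
    _ ≤ gronwallBound (δ x) K (η x) (T - (s₀ - 1)) :=
        gronwallBound_mono dist_nonneg hη₀ K.2 (sub_le_sub ht.2 hxs)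
    _ < ε := hx

theorem eventually_pos_on_Ioc (hu : IsSolFamily p q w u u') (hp : Continuous p)
    (hq : Continuous q) (hw : Continuous w) (hp₀ : ∀ t, 0 < p t) (c₀ s₀ : ℝ) :
    ∃ r > s₀, ∀ᶠ x in 𝓝 (c₀, s₀), ∀ t ∈ Ioc x.2 r, 0 < u x.1 x.2 t := by
  have hquasi : ∀ᶠ t in 𝓝 s₀, 1 / 2 < p t * u' c₀ s₀ t :=
    hu.eventually_lt_quasiDeriv hp₀ c₀ s₀ one_half_lt_one
  obtain ⟨l, r, hs₀, hlr⟩ := mem_nhds_iff_exists_Ioo_subset.1 hquasi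
  refine ⟨r, hs₀.2, ?_⟩
  filter_upwards [hu.eventually_dist_phase_lt hp hq hw hp₀ c₀ s₀ r one_half_pos,
    continuousAt_snd.eventually_const_lt hs₀.1] with x hx hlx t ht
  refine hu.pos_of_deriv_pos (fun τ hτ => ?_) ht.1
  have hτr : τ < r := hτ.2.trans_le ht.2
  have hfar : 1 / 2 < p τ * u' c₀ s₀ τ := hlr ⟨hlx.trans hτ.1, hτr⟩
  have hnear : p τ * u' c₀ s₀ τ - p τ * u' x.1 x.2 τ < 1 / 2 :=
    (le_abs_self _).trans_lt ((le_max_right _ _).trans_lt (hx τ ⟨hτ.1.le, hτr.le⟩))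
  exact pos_of_mul_pos_right (by linarith) (hp₀ τ).le

theorem eventually_pos_on_Icc (hu : IsSolFamily p q w u u') (hp : Continuous p)
    (hq : Continuous q) (hw : Continuous w) (hp₀ : ∀ t, 0 < p t) {c₀ s₀ r : ℝ} (hr : s₀ < r)
    (hpos : ∀ t ∈ Icc r T, 0 < u c₀ s₀ t) :
    ∀ᶠ x in 𝓝 (c₀, s₀), ∀ t ∈ Icc r T, 0 < u x.1 x.2 t := by
  obtain ⟨μ, hμ, hle⟩ := isCompact_Icc.exists_forall_le' (hu.continuous c₀ s₀).continuousOn hpos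
  filter_upwards [hu.eventually_dist_phase_lt hp hq hw hp₀ c₀ s₀ T hμ,
    continuousAt_snd.eventually_lt_const hr] with x hx hxr t ht
  have hnear : u c₀ s₀ t - u x.1 x.2 t < μ :=
    (le_abs_self _).trans_lt ((le_max_left _ _).trans_lt (hx t ⟨hxr.le.trans ht.1, ht.2⟩))
  linarith [hle t ht]

theorem eventually_coe_lt_phiE (hu : IsSolFamily p q w u u') (hp : Continuous p)
    (hq : Continuous q) (hw : Continuous w) (hp₀ : ∀ t, 0 < p t) {c₀ s₀ : ℝ}
    (h : (T : EReal) < phiE u c₀ s₀) : ∀ᶠ x in 𝓝 (c₀, s₀), (T : EReal) < phiE u x.1 x.2 := by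
  rw [hu.coe_lt_phiE_iff hp₀] at h
  obtain ⟨r, hr, hnear⟩ := hu.eventually_pos_on_Ioc hp hq hw hp₀ c₀ s₀
  have hfar := hu.eventually_pos_on_Icc hp hq hw hp₀ hr fun t ht => h t ⟨hr.trans_le ht.1, ht.2⟩
  filter_upwards [hnear, hfar] with x hnear hfar
  refine (hu.coe_lt_phiE_iff hp₀).2 fun t ht => ?_
  rcases le_total t r with htr | hrt
  · exact hnear t ⟨ht.1, htr⟩
  · exact hfar t ⟨hrt, ht.2⟩

theorem eventually_phiE_lt (hu : IsSolFamily p q w u u') (hp : Continuous p)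
    (hq : Continuous q) (hw : Continuous w) (hp₀ : ∀ t, 0 < p t) {c₀ s₀ : ℝ} {y : EReal}
    (h : phiE u c₀ s₀ < y) : ∀ᶠ x in 𝓝 (c₀, s₀), phiE u x.1 x.2 < y := by
  obtain ⟨z, hφ, hz⟩ := hu.exists_isLeast_zeroSet hp₀ h.ne_top
  obtain ⟨r, hzr, hry⟩ := EReal.lt_iff_exists_real_btwn.1 (hφ ▸ h)
  have hderiv : deriv (u c₀ s₀) z < 0 := by
    rw [(hu.hasDerivAt c₀ s₀ z).deriv]
    exact hu.deriv_neg_of_isLeast hp hq hw hp₀ hz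
  have hsign := eventually_nhdsWithin_sign_eq_of_deriv_neg hderiv hz.1.2
  obtain ⟨τ, hτ, hzτ, hτr⟩ := ((hsign.filter_mono nhdsWithin_le_nhds).and
    (Ioo_mem_nhdsGT (EReal.coe_lt_coe_iff.1 hzr))).exists
  rw [sign_neg (sub_neg.2 hzτ), sign_eq_neg_one_iff] at hτ
  filter_upwards [hu.eventually_dist_phase_lt hp hq hw hp₀ c₀ s₀ τ (neg_pos.2 hτ),
    continuousAt_snd.eventually_lt_const (hz.1.1.trans hzτ)] with x hx hxτ
  have hnear : u x.1 x.2 τ - u c₀ s₀ τ < -u c₀ s₀ τ :=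
    (le_abs_self _).trans_lt ((abs_sub_comm _ _).trans_lt
      ((le_max_left _ _).trans_lt (hx τ ⟨hxτ.le, le_rfl⟩)))
  have hle : phiE u x.1 x.2 ≤ τ := by
    by_contra! hlt
    linarith [(hu.coe_lt_phiE_iff hp₀).1 hlt τ ⟨hxτ, le_rfl⟩]
  exact hle.trans_lt ((EReal.coe_lt_coe_iff.2 hτr).trans hry)

theorem continuous_phiE (hu : IsSolFamily p q w u u') (hp : Continuous p) (hq : Continuous q)
    (hw : Continuous w) (hp₀ : ∀ t, 0 < p t) : Continuous fun x : ℝ × ℝ => phiE u x.1 x.2 := by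
  refine continuous_iff_continuousAt.2 fun _ => tendsto_order.2 ⟨fun y hy => ?_, fun y hy => ?_⟩
  · obtain ⟨T, hyT, hT⟩ := EReal.lt_iff_exists_real_btwn.1 hy
    exact (hu.eventually_coe_lt_phiE hp hq hw hp₀ hT).mono fun _ => hyT.trans
  · exact hu.eventually_phiE_lt hp hq hw hp₀ hy

end Continuity

end IsSolFamily

/-- The properties of the zero-functions `c ↦ φ_c` from which the position of the curves is deduced.
Nothing is required of `φ c ⊥`, which stands for no point of the line. -/
structure IsZeroFunction (φ : ℝ → EReal → EReal) : Prop where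
  map_top : ∀ c, φ c ⊤ = ⊤
  lt_map : ∀ c x, ⊥ < x → x < ⊤ → x < φ c x
  map_lt_map : ∀ c x y, ⊥ < x → x < y → φ c y < ⊤ → φ c x < φ c y
  antitoneOn : ∀ x, AntitoneOn (fun c => φ c x) (Ioi 0)
  map_zero : ∀ x, φ 0 x = ⊤
  continuousAt : ∀ c x, ⊥ < x → ContinuousAt (fun y : ℝ × EReal => φ y.1 y.2) (c, x)

theorem phiStep_coe (u : ℝ → ℝ → ℝ → ℝ) (c s : ℝ) : phiStep u c (s : EReal) = phiE u c s := by
  simp [phiStep]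

theorem phiStep_top (u : ℝ → ℝ → ℝ → ℝ) (c : ℝ) : phiStep u c ⊤ = ⊤ := by
  simp [phiStep]

theorem phiStep_bot (u : ℝ → ℝ → ℝ → ℝ) (c : ℝ) : phiStep u c ⊥ = ⊤ := by
  simp [phiStep]

namespace IsSolFamily

variable {p q w : ℝ → ℝ} {u u' : ℝ → ℝ → ℝ → ℝ}

theorem le_phiStep (hu : IsSolFamily p q w u u') (hp₀ : ∀ t, 0 < p t) (c : ℝ) (x : EReal) :
    x ≤ phiStep u c x := by
  induction x with
  | bot => exact bot_le
  | top => rw [phiStep_top]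
  | coe s =>
    rw [phiStep_coe]
    exact (hu.coe_lt_phiE_self hp₀ c s).le

theorem continuousAt_phiStep (hu : IsSolFamily p q w u u') (hp : Continuous p)
    (hq : Continuous q) (hw : Continuous w) (hp₀ : ∀ t, 0 < p t) (c : ℝ) {x : EReal}
    (hx : ⊥ < x) : ContinuousAt (fun y : ℝ × EReal => phiStep u y.1 y.2) (c, x) := by
  induction x with
  | bot => exact absurd hx (lt_irrefl ⊥)
  | top =>
    rw [ContinuousAt, phiStep_top]
    exact tendsto_nhds_top_mono continuousAt_snd
      (Eventually.of_forall fun y => hu.le_phiStep hp₀ y.1 y.2)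
  | coe s =>
    refine ((Topology.IsOpenEmbedding.id.prodMap EReal.isOpenEmbedding_coe).continuousAt_iff
      (x := (c, s))).1 ?_
    simp only [Function.comp_def, Prod.map, id, phiStep_coe]
    exact (hu.continuous_phiE hp hq hw hp₀).continuousAt

theorem isZeroFunction (hu : IsSolFamily p q w u u') (hp : Continuous p) (hq : Continuous q)
    (hw : Continuous w) (hp₀ : ∀ t, 0 < p t) (hq₀ : ∀ t, 0 ≤ q t) :
    IsZeroFunction (phiStep u) where
  map_top := phiStep_top u
  lt_map c x hx hx' := by
    lift x to ℝ using ⟨hx'.ne, hx.ne'⟩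
    rw [phiStep_coe]
    exact hu.coe_lt_phiE_self hp₀ c x
  map_lt_map c x y hx hxy hy := by
    have hy_top : y ≠ ⊤ := fun h => hy.ne (h ▸ phiStep_top u c)
    lift y to ℝ using ⟨hy_top, (hx.trans hxy).ne'⟩
    lift x to ℝ using ⟨hxy.ne_top, hx.ne'⟩
    rw [phiStep_coe] at hy ⊢
    rw [phiStep_coe]
    exact hu.phiE_lt_phiE hp₀ (EReal.coe_lt_coe_iff.1 hxy) hy.ne
  antitoneOn x c hc d _ hcd := by
    induction x with
    | bot => simp only [phiStep_bot, le_rfl]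
    | top => simp only [phiStep_top, le_rfl]
    | coe s =>
      simp only [phiStep_coe]
      exact hu.phiE_le_phiE_of_le hp₀ hq₀ hc hcd s
  map_zero x := by
    induction x with
    | bot => exact phiStep_bot u 0
    | top => exact phiStep_top u 0
    | coe s => rw [phiStep_coe, hu.phiE_zero hp₀ hq₀]
  continuousAt c _ hx := hu.continuousAt_phiStep hp hq hw hp₀ c hx

end IsSolFamily

namespace IsZeroFunction

variable {φ : ℝ → EReal → EReal} {c : ℝ} {x y : EReal}

theorem le_map (hφ : IsZeroFunction φ) (c : ℝ) (x : EReal) : x ≤ φ c x := by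
  induction x with
  | bot => exact bot_le
  | top => exact (hφ.map_top c).ge
  | coe s => exact (hφ.lt_map c s (EReal.bot_lt_coe s) (EReal.coe_lt_top s)).le

theorem map_le_map (hφ : IsZeroFunction φ) (hx : ⊥ < x) (hxy : x ≤ y) : φ c x ≤ φ c y := by
  rcases hxy.eq_or_lt with rfl | hlt
  · exact le_rfl
  · by_cases htop : φ c y = ⊤
    · exact htop ▸ le_top
    · exact (hφ.map_lt_map c x y hx hlt (lt_top_iff_ne_top.2 htop)).le

theorem lt_top_of_map_lt_top (hφ : IsZeroFunction φ) (h : φ c x < ⊤) : x < ⊤ :=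
  (hφ.le_map c x).trans_lt h

end IsZeroFunction

section Iterates

variable {uM uN : ℝ → ℝ → ℝ → ℝ} {a b a' b' : ℝ} {k : ℕ} {x y : EReal}

theorem PhiGt_succ (uM uN : ℝ → ℝ → ℝ → ℝ) (a b : ℝ) (k : ℕ) (x : EReal) :
    PhiGt uM uN a b (k + 1) x =
      (if k % 2 = 0 then phiStep uM a else phiStep uN b) (PhiGt uM uN a b k x) :=
  rfl

theorem PhiLt_eq_PhiGt (uM uN : ℝ → ℝ → ℝ → ℝ) (a b : ℝ) (k : ℕ) :
    PhiLt uM uN a b k = PhiGt uN uM b a k := by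
  induction k with
  | zero => rfl
  | succ k ih => rw [PhiLt, PhiGt, ih]

theorem PhiGt_succ_eq_PhiGt_phiStep (uM uN : ℝ → ℝ → ℝ → ℝ) (a b : ℝ) (k : ℕ) (x : EReal) :
    PhiGt uM uN a b (k + 1) x = PhiGt uN uM b a k (phiStep uM a x) := by
  induction k with
  | zero => rfl
  | succ k ih =>
    rw [PhiGt_succ, ih, PhiGt_succ]
    rcases Nat.mod_two_eq_zero_or_one k with hk | hk
    · rw [if_neg (by omega), if_pos hk]
    · rw [if_pos (by omega), if_neg (by omega)]

theorem le_PhiGt (hM : IsZeroFunction (phiStep uM)) (hN : IsZeroFunction (phiStep uN))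
    (a b : ℝ) (k : ℕ) (x : EReal) : x ≤ PhiGt uM uN a b k x := by
  induction k with
  | zero => exact le_rfl
  | succ k ih =>
    rw [PhiGt_succ]
    split_ifs
    · exact ih.trans (hM.le_map a _)
    · exact ih.trans (hN.le_map b _)

theorem PhiGt_zero_param (hM : IsZeroFunction (phiStep uM)) (hN : IsZeroFunction (phiStep uN))
    (hk : k ≠ 0) (x : EReal) : PhiGt uM uN 0 0 k x = ⊤ := by
  obtain ⟨j, rfl⟩ := Nat.exists_eq_succ_of_ne_zero hk
  rw [PhiGt_succ]
  split_ifs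
  · exact hM.map_zero _
  · exact hN.map_zero _

theorem PhiGt_anti (hM : IsZeroFunction (phiStep uM)) (hN : IsZeroFunction (phiStep uN))
    (ha : 0 < a) (hb : 0 < b) (haa' : a ≤ a') (hbb' : b ≤ b') (k : ℕ) (hx : ⊥ < x) :
    PhiGt uM uN a' b' k x ≤ PhiGt uM uN a b k x := by
  induction k with
  | zero => exact le_rfl
  | succ k ih =>
    have hbot := hx.trans_le (le_PhiGt hM hN a' b' k x)
    rw [PhiGt_succ, PhiGt_succ]
    split_ifs
    · exact (hM.map_le_map hbot ih).trans (hM.antitoneOn _ ha (ha.trans_le haa') haa')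
    · exact (hN.map_le_map hbot ih).trans (hN.antitoneOn _ hb (hb.trans_le hbb') hbb')

theorem PhiGt_lt_PhiGt (hM : IsZeroFunction (phiStep uM)) (hN : IsZeroFunction (phiStep uN))
    (hx : ⊥ < x) (hxy : x < y) (hfin : PhiGt uM uN a b k y < ⊤) :
    PhiGt uM uN a b k x < PhiGt uM uN a b k y := by
  induction k with
  | zero => exact hxy
  | succ k ih =>
    have hbot := hx.trans_le (le_PhiGt hM hN a b k x)
    rw [PhiGt_succ] at hfin
    rw [PhiGt_succ, PhiGt_succ]
    split_ifs at hfin ⊢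
    · exact hM.map_lt_map a _ _ hbot (ih (hM.lt_top_of_map_lt_top hfin)) hfin
    · exact hN.map_lt_map b _ _ hbot (ih (hN.lt_top_of_map_lt_top hfin)) hfin

theorem PhiGt_lt_PhiGt_succ (hM : IsZeroFunction (phiStep uM)) (hN : IsZeroFunction (phiStep uN))
    (hx : ⊥ < x) (hfin : PhiGt uM uN a b (k + 1) x < ⊤) :
    PhiGt uM uN a b k x < PhiGt uM uN a b (k + 1) x := by
  have hbot := hx.trans_le (le_PhiGt hM hN a b k x)
  rw [PhiGt_succ] at hfin ⊢
  split_ifs at hfin ⊢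
  · exact hM.lt_map a _ hbot (hM.lt_top_of_map_lt_top hfin)
  · exact hN.lt_map b _ hbot (hN.lt_top_of_map_lt_top hfin)

theorem PhiLt_lt_PhiGt_succ (hM : IsZeroFunction (phiStep uM)) (hN : IsZeroFunction (phiStep uN))
    (hx : ⊥ < x) (hfin : PhiGt uM uN a b (k + 1) x < ⊤) :
    PhiLt uM uN a b k x < PhiGt uM uN a b (k + 1) x := by
  have hx_top : x < ⊤ := (le_PhiGt hM hN a b (k + 1) x).trans_lt hfin
  rw [PhiGt_succ_eq_PhiGt_phiStep] at hfin ⊢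
  rw [PhiLt_eq_PhiGt]
  exact PhiGt_lt_PhiGt hN hM hx (hM.lt_map a x hx hx_top) hfin

theorem continuous_PhiGt (hM : IsZeroFunction (phiStep uM)) (hN : IsZeroFunction (phiStep uN))
    (k : ℕ) (hx : ⊥ < x) : Continuous fun ab : ℝ × ℝ => PhiGt uM uN ab.1 ab.2 k x := by
  induction k with
  | zero => exact continuous_const
  | succ k ih =>
    refine continuous_iff_continuousAt.2 fun ab => ?_
    have hbot := hx.trans_le (le_PhiGt hM hN ab.1 ab.2 k x)
    simp only [PhiGt_succ]
    split_ifs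
    · exact (hM.continuousAt ab.1 _ hbot).comp
        (f := fun ab : ℝ × ℝ => (ab.1, PhiGt uM uN ab.1 ab.2 k x))
        (continuousAt_fst.prodMk ih.continuousAt)
    · exact (hN.continuousAt ab.2 _ hbot).comp
        (f := fun ab : ℝ × ℝ => (ab.2, PhiGt uM uN ab.1 ab.2 k x))
        (continuousAt_snd.prodMk ih.continuousAt)

end Iterates

section Curves

variable {uM uN : ℝ → ℝ → ℝ → ℝ} {T₁ T₂ a b a' b' : ℝ} {k : ℕ}

theorem mem_CLt_iff_mem_CGt :
    (a, b) ∈ CLt uM uN T₁ T₂ k ↔ (b, a) ∈ CGt uN uM T₁ T₂ k := by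
  simp only [CLt, CGt, mem_ofPred_eq, PhiLt_eq_PhiGt]
  exact and_left_comm

theorem CGt_nonempty_of_PhiGt_lt (hM : IsZeroFunction (phiStep uM))
    (hN : IsZeroFunction (phiStep uN)) (hk : k ≠ 0) (ha : 0 < a) (hb : 0 < b)
    (h : PhiGt uM uN a b k T₁ < T₂) : (CGt uM uN T₁ T₂ k).Nonempty := by
  have hcont : Continuous fun r : ℝ => PhiGt uM uN (r * a) (r * b) k T₁ :=
    (continuous_PhiGt hM hN k (EReal.bot_lt_coe T₁)).comp
      (f := fun r : ℝ => (r * a, r * b)) (by fun_prop)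
  have hzero : PhiGt uM uN (0 * a) (0 * b) k T₁ = ⊤ := by
    rw [zero_mul, zero_mul, PhiGt_zero_param hM hN hk]
  have hone : PhiGt uM uN (1 * a) (1 * b) k T₁ ≤ T₂ := by
    rw [one_mul, one_mul]
    exact h.le
  obtain ⟨r, hr, hreq⟩ := intermediate_value_Icc' zero_le_one hcont.continuousOn
    ⟨hone, le_top.trans_eq hzero.symm⟩
  have hr₀ : 0 < r := hr.1.lt_of_ne <| by
    rintro rfl
    exact EReal.coe_ne_top T₂ (hreq.symm.trans hzero)
  exact ⟨(r * a, r * b), mul_pos hr₀ ha, mul_pos hr₀ hb, hreq⟩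

theorem not_le_of_mem_CGt_of_PhiGt_lt (hM : IsZeroFunction (phiStep uM))
    (hN : IsZeroFunction (phiStep uN)) (ha : 0 < a) (hb : 0 < b)
    (hmem : (a', b') ∈ CGt uM uN T₁ T₂ k) (h : PhiGt uM uN a b k T₁ < T₂) :
    ¬(a ≤ a' ∧ b ≤ b') := fun ⟨haa', hbb'⟩ =>
  (PhiGt_anti hM hN ha hb haa' hbb' k (EReal.bot_lt_coe T₁)).not_gt (h.trans_eq hmem.2.2.symm)

theorem PhiGt_lt_of_mem_CGt_succ (hM : IsZeroFunction (phiStep uM))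
    (hN : IsZeroFunction (phiStep uN)) (h : (a, b) ∈ CGt uM uN T₁ T₂ (k + 1)) :
    PhiGt uM uN a b k T₁ < T₂ :=
  h.2.2 ▸ PhiGt_lt_PhiGt_succ hM hN (EReal.bot_lt_coe T₁) (h.2.2.trans_lt (EReal.coe_lt_top T₂))

theorem PhiLt_lt_of_mem_CGt_succ (hM : IsZeroFunction (phiStep uM))
    (hN : IsZeroFunction (phiStep uN)) (h : (a, b) ∈ CGt uM uN T₁ T₂ (k + 1)) :
    PhiLt uM uN a b k T₁ < T₂ :=
  h.2.2 ▸ PhiLt_lt_PhiGt_succ hM hN (EReal.bot_lt_coe T₁) (h.2.2.trans_lt (EReal.coe_lt_top T₂))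

end Curves

theorem curves_below_next_general
    {p₁ q₁ p₂ q₂ m n : ℝ → ℝ} {uM uM' uN uN' : ℝ → ℝ → ℝ → ℝ} {T₁ T₂ : ℝ} {k : ℕ} (hk : k ≠ 0)
    (hp₁ : Continuous p₁) (hq₁ : Continuous q₁) (hm : Continuous m)
    (hp₂ : Continuous p₂) (hq₂ : Continuous q₂) (hn : Continuous n)
    (hp₁pos : ∀ t, 0 < p₁ t) (hq₁nn : ∀ t, 0 ≤ q₁ t)
    (hp₂pos : ∀ t, 0 < p₂ t) (hq₂nn : ∀ t, 0 ≤ q₂ t)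
    (hM : IsSolFamily p₁ q₁ m uM uM') (hN : IsSolFamily p₂ q₂ n uN uN')
    (hne : (CGt uM uN T₁ T₂ (k + 1)).Nonempty) :
    (CGt uM uN T₁ T₂ k).Nonempty ∧ (CLt uM uN T₁ T₂ k).Nonempty ∧
    (∀ x y y' : ℝ, (x, y) ∈ CGt uM uN T₁ T₂ k →
      (x, y') ∈ CGt uM uN T₁ T₂ (k + 1) → y < y') ∧
    (∀ x y y' : ℝ, (x, y) ∈ CLt uM uN T₁ T₂ k →
      (x, y') ∈ CGt uM uN T₁ T₂ (k + 1) → y < y') := by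
  have hφM := hM.isZeroFunction hp₁ hq₁ hm hp₁pos hq₁nn
  have hφN := hN.isZeroFunction hp₂ hq₂ hn hp₂pos hq₂nn
  have hlt_swap {x y : ℝ} (h : (x, y) ∈ CGt uM uN T₁ T₂ (k + 1)) :
      PhiGt uN uM y x k T₁ < T₂ :=
    PhiLt_eq_PhiGt uM uN x y k ▸ PhiLt_lt_of_mem_CGt_succ hφM hφN h
  obtain ⟨⟨a, b⟩, hab⟩ := hne
  refine ⟨?_, ?_, fun x y y' hmem hnext => ?_, fun x y y' hmem hnext => ?_⟩
  · exact CGt_nonempty_of_PhiGt_lt hφM hφN hk hab.1 hab.2.1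
      (PhiGt_lt_of_mem_CGt_succ hφM hφN hab)
  · obtain ⟨⟨b', a'⟩, hmem⟩ :=
      CGt_nonempty_of_PhiGt_lt hφN hφM hk hab.2.1 hab.1 (hlt_swap hab)
    exact ⟨(a', b'), mem_CLt_iff_mem_CGt.2 hmem⟩
  · by_contra! hle
    exact not_le_of_mem_CGt_of_PhiGt_lt hφM hφN hnext.1 hnext.2.1 hmem
      (PhiGt_lt_of_mem_CGt_succ hφM hφN hnext) ⟨le_rfl, hle⟩
  · by_contra! hle
    exact not_le_of_mem_CGt_of_PhiGt_lt hφN hφM hnext.2.1 hnext.1 (mem_CLt_iff_mem_CGt.1 hmem)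
      (hlt_swap hnext) ⟨hle, le_rfl⟩

end

/-- For `k ≥ 2`, if `C_{k+1}^{>++}` is nonempty then so are
`C_k^{>++}` and `C_k^{<++}`; moreover the curves `f_k^>` and `f_k^<` lie strictly
below `f_{k+1}^>`: for a common abscissa `x`, the ordinate on `C_k^{>++}`
(resp. `C_k^{<++}`) is strictly smaller than the one on `C_{k+1}^{>++}`. -/
theorem curves_below_next
    (p q m n : ℝ → ℝ) (uM uM' uN uN' : ℝ → ℝ → ℝ → ℝ) (T₁ T₂ : ℝ) (k : ℕ)
    (hk : 2 ≤ k) (hT : T₁ < T₂)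
    (hp : Continuous p) (hq : Continuous q) (hm : Continuous m) (hn : Continuous n)
    (hppos : ∀ t, 0 < p t) (hqnn : ∀ t, 0 ≤ q t)
    (hM : IsSolFamily p q m uM uM') (hN : IsSolFamily p q n uN uN')
    (hne : (CGt uM uN T₁ T₂ (k + 1)).Nonempty) :
    (CGt uM uN T₁ T₂ k).Nonempty ∧ (CLt uM uN T₁ T₂ k).Nonempty ∧
    (∀ x y y' : ℝ, (x, y) ∈ CGt uM uN T₁ T₂ k →
      (x, y') ∈ CGt uM uN T₁ T₂ (k + 1) → y < y') ∧
    (∀ x y y' : ℝ, (x, y) ∈ CLt uM uN T₁ T₂ k →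
      (x, y') ∈ CGt uM uN T₁ T₂ (k + 1) → y < y') := by
  exact curves_below_next_general (by omega) hp hq hm hp hq hn hppos hqnn hppos hqnn hM hN hne
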